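/- Let T = {1243, 2431, 3412} (patterns of length 4). Then the generating function for T-avoiders satisfies, as formal power series over ℚ, (1-x)^4·(1-2x)·(1-3x+x^2)^2·F_T(x) = 1 - 11x + 51x^2 - 129x^3 + 195x^4 - 183x^5 + 104x^6 - 30x^7 + 3x^8; that is, F_T(x) = (1-11x+51x^2-129x^3+195x^4-183x^5+104x^6-30x^7+3x^8)/((1-x)^4(1-2x)(1-3x+x^2)^2). -/

import Mathlib

open PowerSeries

/-- A permutation `π` of `{0,…,n-1}` contains the pattern `σ` (of length `k`) if there is an
order-embedding of positions on which the values of `π` appear in the same relative order as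
the values of `σ`. -/
def ContainsPattern {n k : ℕ} (π : Equiv.Perm (Fin n)) (σ : Fin k → Fin k) : Prop :=
  ∃ f : Fin k ↪o Fin n, ∀ a b : Fin k, σ a < σ b ↔ π (f a) < π (f b)

/-- The number of permutations of length `n` avoiding every pattern in `T`. -/
noncomputable def avoiderCount (T : Set (Fin 4 → Fin 4)) (n : ℕ) : ℕ :=
  Nat.card {π : Equiv.Perm (Fin n) // ∀ σ ∈ T, ¬ ContainsPattern π σ}

/-- The generating function `F_T(x) = ∑_n |S_n(T)| xⁿ` over `ℚ`. -/
noncomputable def avoiderGF (T : Set (Fin 4 → Fin 4)) : PowerSeries ℚ :=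
  PowerSeries.mk fun n => (avoiderCount T n : ℚ)

/-- The generating function of the Catalan numbers over `ℚ`. -/
noncomputable def catalanGF : PowerSeries ℚ :=
  PowerSeries.mk fun n => (catalan n : ℚ)

/-!
Every permutation of length `n + 1` arises exactly once from one of length `n` by inserting a new
smallest value, and it avoids `1243`, `2431` and `3412` iff the shorter one does and the insertion
takes place at an *active site*: a position lying strictly inside every occurrence of `132` and not
between the `3` and the `1` of any occurrence of `231`. After an insertion at `v`, a site right
of `v` survives iff no descent separates it from `v`, and a site left of `v` survives iff the word
increases from `v` on and decreases up to the site. This leaves very few possible arrangements of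
active sites: as long as the word is a valley (decreasing, then increasing) all sites are active;
as soon as it is not, either its sites split into two blocks or at most two sites remain.

Recording the arrangement as a label turns the tree of avoiders into a succession rule, hence into
a linear system `F ℓ = 1 + x ∑ F κ` over the children `κ` of `ℓ`. Such a system determines its
solution coefficient by coefficient, so it suffices to exhibit one; its value at the label of the
empty permutation is the generating function sought.
-/

section Insertion

/-- The increasing map `ℕ → ℕ` whose range omits exactly `v`: it relabels the positions of a word
when a new letter is put at position `v`. -/
def skip (v i : ℕ) : ℕ := if i < v then i else i + 1

/-- The word obtained from `p` by increasing every letter by one and inserting the new smallest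
letter `0` at position `v`. -/
def insertMin (v : ℕ) (p : ℕ → ℕ) (i : ℕ) : ℕ :=
  if i < v then p i + 1 else if i = v then 0 else p (i - 1) + 1

variable {v w i j : ℕ} {p : ℕ → ℕ}

theorem skip_lt_skip : skip v i < skip v j ↔ i < j := by grind [skip]

theorem skip_lt_iff_of_le (h : w ≤ v) : skip v i < w ↔ i < w := by grind [skip]

theorem skip_lt_succ_iff_of_le (h : v ≤ w) : skip v i < w + 1 ↔ i < w := by grind [skip]

theorem skip_lt_self : skip v i < v ↔ i < v := skip_lt_iff_of_le le_rfl

theorem lt_skip_self : v < skip v i ↔ v ≤ i := by grind [skip]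

theorem insertMin_self : insertMin v p v = 0 := by simp [insertMin]

theorem insertMin_skip : insertMin v p (skip v i) = p i + 1 := by grind [insertMin, skip]

theorem insertMin_skip_lt_insertMin_skip :
    insertMin v p (skip v i) < insertMin v p (skip v j) ↔ p i < p j := by
  simp only [insertMin_skip, Nat.add_lt_add_iff_right]

theorem insertMin_self_lt_insertMin_skip : insertMin v p v < insertMin v p (skip v i) := by
  simp only [insertMin_self, insertMin_skip, Nat.zero_lt_succ]

theorem eq_or_exists_eq_skip (v i : ℕ) : i = v ∨ ∃ j, i = skip v j := by
  rcases lt_trichotomy i v with h | h | h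
  · exact .inr ⟨i, by grind [skip]⟩
  · exact .inl h
  · exact .inr ⟨i - 1, by grind [skip]⟩

theorem exists_eq_skip_of_insertMin_lt (h : insertMin v p i < insertMin v p j) :
    ∃ k, j = skip v k := by
  refine (eq_or_exists_eq_skip v j).resolve_left ?_
  rintro rfl
  simp [insertMin_self] at h

theorem insertMin_inj {q : ℕ → ℕ} :
    insertMin v p = insertMin w q ↔ v = w ∧ p = q := by
  refine ⟨fun h => ?_, fun ⟨hv, hp⟩ => hv ▸ hp ▸ rfl⟩
  obtain rfl : v = w := by
    have := congrFun h v
    grind [insertMin]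
  refine ⟨rfl, funext fun i => ?_⟩
  simpa only [insertMin_skip, Nat.add_right_cancel_iff] using congrFun h (skip v i)

theorem monotoneOn_Ico_of_le_succ (h : j ≤ i + 1) : MonotoneOn p (Set.Ico i j) :=
  Set.Subsingleton.monotoneOn _ fun _ _ _ _ => by grind

theorem monotoneOn_Ici_insertMin_succ (h : v ≤ i) :
    MonotoneOn (insertMin v p) (Set.Ici (i + 1)) ↔ MonotoneOn p (Set.Ici i) := by
  constructor
  · intro hp a ha b hb hab
    have := hp (a := a + 1) (b := b + 1) (by grind) (by grind) (by grind)
    grind [insertMin]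
  · intro hp a ha b hb hab
    have := hp (a := a - 1) (b := b - 1) (by grind) (by grind) (by grind)
    grind [insertMin]

theorem antitoneOn_Iio_insertMin (h : i ≤ v) :
    AntitoneOn (insertMin v p) (Set.Iio i) ↔ AntitoneOn p (Set.Iio i) := by
  simp only [AntitoneOn, Set.mem_Iio]
  grind [insertMin]

theorem antitoneOn_Iio_insertMin_succ :
    AntitoneOn (insertMin v p) (Set.Iio (v + 1)) ↔ AntitoneOn p (Set.Iio v) := by
  simp only [AntitoneOn, Set.mem_Iio]
  grind [insertMin]

theorem not_antitoneOn_Iio_insertMin (h : v + 1 < i) :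
    ¬ AntitoneOn (insertMin v p) (Set.Iio i) := fun hp => by
  have := hp (a := v) (b := v + 1) (by grind) (by grind) (by grind)
  grind [insertMin]

theorem not_monotoneOn_Ico_insertMin (hi : i < v) (hj : v < j) :
    ¬ MonotoneOn (insertMin v p) (Set.Ico i j) := fun hp => by
  have := hp (a := v - 1) (b := v) (by grind) (by grind) (by grind)
  grind [insertMin]

theorem monotoneOn_Ici_insertMin_self (hp : MonotoneOn p (Set.Ici v)) :
    MonotoneOn (insertMin v p) (Set.Ici v) := fun a ha b _ hab => by
  rcases eq_or_lt_of_le (Set.mem_Ici.1 ha) with rfl | hva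
  · simp only [insertMin_self, zero_le]
  · exact (monotoneOn_Ici_insertMin_succ le_rfl).2 hp hva (hva.trans_le hab) hab

theorem strictMonoOn_Ici_insertMin_self (hp : StrictMonoOn p (Set.Ici v)) :
    StrictMonoOn (insertMin v p) (Set.Ici v) := fun a ha b _ hab => by
  have := @hp (a - 1) (b := b - 1)
  grind [insertMin]

theorem strictAntiOn_Iic_insertMin_self (hp : StrictAntiOn p (Set.Iio v)) :
    StrictAntiOn (insertMin v p) (Set.Iic v) := fun a _ b hb hab => by
  have := @hp a (b := b)
  grind [insertMin]

theorem strictAntiOn_Iic_insertMin (h : i < v) (hp : StrictAntiOn p (Set.Iic i)) :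
    StrictAntiOn (insertMin v p) (Set.Iic i) := by
  simp only [StrictAntiOn, Set.mem_Iic] at *
  grind [insertMin]

end Insertion

section ActiveSites

/-- The word `p` avoids `1243`, `2431` and `3412`. -/
def Avoids (p : ℕ → ℕ) : Prop :=
  ∀ ⦃i j k l⦄, i < j → j < k → k < l →
    ¬ (p i < p j ∧ p j < p l ∧ p l < p k) ∧
    ¬ (p l < p i ∧ p i < p k ∧ p k < p j) ∧
    ¬ (p k < p l ∧ p l < p i ∧ p i < p j)

/-- Position `v` is an active site of `p`: the letter inserted by `insertMin v p` plays the role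
of `1` in no occurrence of `1243`, `2431` or `3412`. -/
def Active (p : ℕ → ℕ) (v : ℕ) : Prop :=
  ∀ ⦃i j k⦄, i < j → j < k →
    (p i < p k → p k < p j → i < v ∧ v ≤ k) ∧ (p k < p i → p i < p j → v ≤ j ∨ k < v)

variable {v w : ℕ} {p : ℕ → ℕ}

theorem avoids_insertMin : Avoids (insertMin v p) ↔ Avoids p ∧ Active p v := by
  constructor
  · refine fun h => ⟨fun i j k l hij hjk hkl => ?_, fun i j k hij hjk => ⟨fun hik hkj => ?_, ?_⟩⟩
    · simpa only [insertMin_skip_lt_insertMin_skip] using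
        h (skip_lt_skip (v := v).2 hij) (skip_lt_skip.2 hjk) (skip_lt_skip.2 hkl)
    · refine ⟨lt_of_not_ge fun hvi => ?_, le_of_not_gt fun hkv => ?_⟩
      · exact (h (lt_skip_self.2 hvi) (skip_lt_skip.2 hij) (skip_lt_skip.2 hjk)).1
          (by simp [insertMin_self, insertMin_skip, hik, hkj])
      · exact (h (skip_lt_skip.2 hij) (skip_lt_skip.2 hjk) (skip_lt_self.2 hkv)).2.1
          (by simp [insertMin_self, insertMin_skip, hik, hkj])
    · refine fun hki hij' => or_iff_not_imp_left.2 fun hjv => lt_of_not_ge fun hvk => ?_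
      exact (h (skip_lt_skip.2 hij) (skip_lt_self.2 (not_le.1 hjv)) (lt_skip_self.2 hvk)).2.2
        (by simp [insertMin_self, insertMin_skip, hki, hij'])
  · rintro ⟨hp, hv⟩ a b c d hab hbc hcd
    refine ⟨?_, ?_, ?_⟩ <;> rintro ⟨h₁, h₂, h₃⟩
    all_goals
      obtain ⟨i, rfl⟩ := exists_eq_skip_of_insertMin_lt h₁
      obtain ⟨j, rfl⟩ := exists_eq_skip_of_insertMin_lt h₂
      obtain ⟨k, rfl⟩ := exists_eq_skip_of_insertMin_lt h₃
    · rcases eq_or_exists_eq_skip v a with rfl | ⟨l, rfl⟩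
      · simp only [skip_lt_skip, lt_skip_self, insertMin_skip_lt_insertMin_skip] at *
        exact absurd (hv hbc hcd |>.1 h₂ h₃).1 (by omega)
      · simp only [skip_lt_skip, insertMin_skip_lt_insertMin_skip] at *
        exact (hp hab hbc hcd).1 ⟨h₁, h₂, h₃⟩
    · rcases eq_or_exists_eq_skip v d with rfl | ⟨l, rfl⟩
      · simp only [skip_lt_skip, skip_lt_self, insertMin_skip_lt_insertMin_skip] at *
        exact absurd (hv hab hbc |>.1 h₂ h₃).2 (by omega)
      · simp only [skip_lt_skip, insertMin_skip_lt_insertMin_skip] at *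
        exact (hp hab hbc hcd).2.1 ⟨h₁, h₂, h₃⟩
    · rcases eq_or_exists_eq_skip v c with rfl | ⟨l, rfl⟩
      · simp only [skip_lt_self, lt_skip_self, skip_lt_skip, insertMin_skip_lt_insertMin_skip] at *
        have := (hv hab (by omega)).2 h₂ h₃
        omega
      · simp only [skip_lt_skip, insertMin_skip_lt_insertMin_skip] at *
        exact (hp hab hbc hcd).2.2 ⟨h₁, h₂, h₃⟩

theorem active_insertMin : Active (insertMin v p) w ↔
    (∀ ⦃i j k⦄, i < j → j < k → (p i < p k → p k < p j → skip v i < w ∧ w ≤ skip v k) ∧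
      (p k < p i → p i < p j → w ≤ skip v j ∨ skip v k < w)) ∧
    (∀ ⦃j k⦄, v ≤ j → j < k → p k < p j → v < w ∧ w ≤ skip v k) ∧
    (∀ ⦃i j⦄, i < j → j < v → p i < p j → w ≤ skip v j ∨ v < w) := by
  constructor
  · refine fun h => ⟨fun i j k hij hjk => ?_, fun j k hvj hjk hkj => ?_, fun i j hij hjv hij' => ?_⟩
    · simpa only [insertMin_skip_lt_insertMin_skip] using
        h (skip_lt_skip (v := v).2 hij) (skip_lt_skip.2 hjk)
    · exact (h (lt_skip_self.2 hvj) (skip_lt_skip.2 hjk)).1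
        insertMin_self_lt_insertMin_skip (insertMin_skip_lt_insertMin_skip.2 hkj)
    · exact (h (skip_lt_skip.2 hij) (skip_lt_self.2 hjv)).2
        insertMin_self_lt_insertMin_skip (insertMin_skip_lt_insertMin_skip.2 hij')
  · rintro ⟨hskip, hfirst, hlast⟩ a b c hab hbc
    refine ⟨fun hac hcb => ?_, fun hca hab' => ?_⟩
    · obtain ⟨k, rfl⟩ := exists_eq_skip_of_insertMin_lt hac
      obtain ⟨j, rfl⟩ := exists_eq_skip_of_insertMin_lt hcb
      rcases eq_or_exists_eq_skip v a with rfl | ⟨i, rfl⟩ <;>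
        simp only [skip_lt_skip, lt_skip_self, insertMin_skip_lt_insertMin_skip] at *
      · exact hfirst hab hbc hcb
      · exact (hskip hab hbc).1 hac hcb
    · obtain ⟨i, rfl⟩ := exists_eq_skip_of_insertMin_lt hca
      obtain ⟨j, rfl⟩ := exists_eq_skip_of_insertMin_lt hab'
      rcases eq_or_exists_eq_skip v c with rfl | ⟨k, rfl⟩ <;>
        simp only [skip_lt_skip, skip_lt_self, insertMin_skip_lt_insertMin_skip] at *
      · exact hlast hab hbc hab'
      · exact (hskip hab hbc).2 hca hab'

theorem active_insertMin_of_le (h : w ≤ v) : Active (insertMin v p) w ↔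
    Active p w ∧ MonotoneOn p (Set.Ici v) ∧ AntitoneOn p (Set.Iio w) := by
  simp only [active_insertMin, ← not_lt (b := w), skip_lt_iff_of_le h]
  refine and_congr (by simp only [Active, not_lt]) (and_congr ?_ ?_)
  · simp only [monotoneOn_iff_forall_lt, Set.mem_Ici]
    grind
  · simp only [antitoneOn_iff_forall_lt, Set.mem_Iio]
    grind

theorem active_insertMin_succ_of_le (h : v ≤ w) : Active (insertMin v p) (w + 1) ↔
    Active p w ∧ MonotoneOn p (Set.Ico v w) := by
  simp only [active_insertMin, ← not_lt (b := w + 1), skip_lt_succ_iff_of_le h]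
  refine and_congr (by simp only [Active, not_lt]) ?_
  simp only [monotoneOn_iff_forall_lt, Set.mem_Ico]
  grind

theorem active_insertMin_iff_of_not_monotoneOn (h : ¬ MonotoneOn p (Set.Ici v)) :
    Active (insertMin v p) w ↔
      v < w ∧ Active p (w - 1) ∧ MonotoneOn p (Set.Ico v (w - 1)) := by
  rcases le_or_gt w v with hw | hw
  · simp only [active_insertMin_of_le hw, h, hw.not_gt, false_and, and_false]
  · obtain ⟨u, rfl⟩ : ∃ u, w = u + 1 := ⟨w - 1, by omega⟩
    simp only [active_insertMin_succ_of_le (Nat.lt_succ_iff.1 hw), hw, true_and,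
      Nat.add_sub_cancel]

theorem active_insertMin_iff_of_monotoneOn (h : MonotoneOn p (Set.Ici v)) :
    Active (insertMin v p) w ↔
      (w ≤ v ∧ Active p w ∧ AntitoneOn p (Set.Iio w)) ∨ (v < w ∧ Active p (w - 1)) := by
  rcases le_or_gt w v with hw | hw
  · simp only [active_insertMin_of_le hw, h, hw, hw.not_gt, true_and, false_and, or_false]
  · obtain ⟨u, rfl⟩ : ∃ u, w = u + 1 := ⟨w - 1, by omega⟩
    have hmono : MonotoneOn p (Set.Ico v u) := h.mono Set.Ico_subset_Ici_self
    simp only [active_insertMin_succ_of_le (Nat.lt_succ_iff.1 hw), hmono, hw, hw.not_ge, true_and,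
      and_true, false_and, false_or, Nat.add_sub_cancel]

end ActiveSites

section Shapes

/-- The word `p` has the single active site `s`, and a descent starting at or after `s`. -/
structure HasOneSite (s : ℕ) (p : ℕ → ℕ) : Prop where
  active_iff : ∀ w, Active p w ↔ w = s
  not_monotoneOn : ¬ MonotoneOn p (Set.Ici s)

/-- The active sites of `p` are `s` and `s + 1`, and both are followed by a descent. -/
structure HasAdjacentSites (s : ℕ) (p : ℕ → ℕ) : Prop where
  active_iff : ∀ w, Active p w ↔ w = s ∨ w = s + 1
  not_monotoneOn : ¬ MonotoneOn p (Set.Ici (s + 1))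

/-- The active sites of `p` are `s < t`, with a descent between them but none after `t`, and the
word decreases before `s` but not before `t`. -/
structure HasSeparatedSites (s t : ℕ) (p : ℕ → ℕ) : Prop where
  lt : s < t
  active_iff : ∀ w, Active p w ↔ w = s ∨ w = t
  antitoneOn : AntitoneOn p (Set.Iio s)
  not_antitoneOn : ¬ AntitoneOn p (Set.Iio t)
  not_monotoneOn : ¬ MonotoneOn p (Set.Ico s t)
  monotoneOn : MonotoneOn p (Set.Ici t)

/-- The active sites of `p` are `s` and `s + 1`, on either side of a peak: the word decreases
before `s`, has the ascent `p (s - 1) < p s`, the descent `p (s + 1) < p s`, and increases from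
`s + 1` on. -/
structure HasPeakSites (s : ℕ) (p : ℕ → ℕ) : Prop where
  active_iff : ∀ w, Active p w ↔ w = s ∨ w = s + 1
  antitoneOn : AntitoneOn p (Set.Iio s)
  not_antitoneOn : ¬ AntitoneOn p (Set.Iio (s + 1))
  not_monotoneOn : ¬ MonotoneOn p (Set.Ici s)
  monotoneOn : MonotoneOn p (Set.Ici (s + 1))

/-- The active sites of `p` split into an initial block `w ≤ c + 1`, where `c` is the first ascent
of `p`, and a final block `q < w`, with a descent between the blocks and none from `q` on. -/
structure IsSplit (c q : ℕ) (p : ℕ → ℕ) : Prop where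
  lt : c + 1 < q
  active_iff : ∀ w, Active p w ↔ w ≤ c + 1 ∨ q < w
  strictAntiOn : StrictAntiOn p (Set.Iic c)
  ascent : p c < p (c + 1)
  descent : p q < p (c + 1)
  monotoneOn : MonotoneOn p (Set.Ici q)

/-- The word `p` decreases up to position `c` and increases from there on. -/
structure IsValley (c : ℕ) (p : ℕ → ℕ) : Prop where
  strictAntiOn : StrictAntiOn p (Set.Iic c)
  strictMonoOn : StrictMonoOn p (Set.Ici c)

variable {s t c q v w : ℕ} {p : ℕ → ℕ}

theorem not_monotoneOn_Ici_of_le (h : s ≤ t) (hp : ¬ MonotoneOn p (Set.Ici t)) :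
    ¬ MonotoneOn p (Set.Ici s) :=
  fun hs => hp (hs.mono (Set.Ici_subset_Ici.2 h))

theorem HasOneSite.hasOneSite_insertMin (h : HasOneSite s p) :
    HasOneSite (s + 1) (insertMin s p) where
  active_iff w := by
    simp only [active_insertMin_iff_of_not_monotoneOn h.not_monotoneOn, h.active_iff]
    grind [monotoneOn_Ico_of_le_succ]
  not_monotoneOn := (monotoneOn_Ici_insertMin_succ le_rfl).not.2 h.not_monotoneOn

theorem HasAdjacentSites.hasAdjacentSites_insertMin (h : HasAdjacentSites s p) :
    HasAdjacentSites (s + 1) (insertMin s p) where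
  active_iff w := by
    simp only [active_insertMin_iff_of_not_monotoneOn
      (not_monotoneOn_Ici_of_le s.le_succ h.not_monotoneOn), h.active_iff]
    grind [monotoneOn_Ico_of_le_succ]
  not_monotoneOn := (monotoneOn_Ici_insertMin_succ s.le_succ).not.2 h.not_monotoneOn

theorem HasAdjacentSites.hasOneSite_insertMin (h : HasAdjacentSites s p) :
    HasOneSite (s + 2) (insertMin (s + 1) p) where
  active_iff w := by
    simp only [active_insertMin_iff_of_not_monotoneOn h.not_monotoneOn, h.active_iff]
    grind [monotoneOn_Ico_of_le_succ]
  not_monotoneOn := (monotoneOn_Ici_insertMin_succ le_rfl).not.2 h.not_monotoneOn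

theorem HasSeparatedSites.hasOneSite_insertMin (h : HasSeparatedSites s t p) :
    HasOneSite (s + 1) (insertMin s p) := by
  have hs : ¬ MonotoneOn p (Set.Ici s) := fun hp =>
    h.not_monotoneOn (hp.mono Set.Ico_subset_Ici_self)
  refine ⟨fun w => ?_, (monotoneOn_Ici_insertMin_succ le_rfl).not.2 hs⟩
  simp only [active_insertMin_iff_of_not_monotoneOn hs, h.active_iff]
  grind [monotoneOn_Ico_of_le_succ, h.not_monotoneOn]

theorem HasSeparatedSites.hasSeparatedSites_insertMin (h : HasSeparatedSites s t p) :
    HasSeparatedSites s (t + 1) (insertMin t p) where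
  lt := h.lt.trans t.lt_succ_self
  active_iff w := by
    simp only [active_insertMin_iff_of_monotoneOn h.monotoneOn, h.active_iff]
    grind [h.antitoneOn, h.not_antitoneOn, h.lt]
  antitoneOn := (antitoneOn_Iio_insertMin h.lt.le).2 h.antitoneOn
  not_antitoneOn := antitoneOn_Iio_insertMin_succ.not.2 h.not_antitoneOn
  not_monotoneOn := not_monotoneOn_Ico_insertMin h.lt t.lt_succ_self
  monotoneOn := (monotoneOn_Ici_insertMin_succ le_rfl).2 h.monotoneOn

theorem HasPeakSites.hasPeakSites_insertMin (h : HasPeakSites s p) :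
    HasPeakSites (s + 1) (insertMin s p) where
  active_iff w := by
    simp only [active_insertMin_iff_of_not_monotoneOn h.not_monotoneOn, h.active_iff]
    grind [monotoneOn_Ico_of_le_succ]
  antitoneOn := antitoneOn_Iio_insertMin_succ.2 h.antitoneOn
  not_antitoneOn := not_antitoneOn_Iio_insertMin (by omega)
  not_monotoneOn := (monotoneOn_Ici_insertMin_succ le_rfl).not.2 h.not_monotoneOn
  monotoneOn := (monotoneOn_Ici_insertMin_succ s.le_succ).2 h.monotoneOn

theorem HasPeakSites.hasSeparatedSites_insertMin (h : HasPeakSites s p) :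
    HasSeparatedSites s (s + 2) (insertMin (s + 1) p) where
  lt := by omega
  active_iff w := by
    simp only [active_insertMin_iff_of_monotoneOn h.monotoneOn, h.active_iff]
    grind [h.antitoneOn, h.not_antitoneOn]
  antitoneOn := (antitoneOn_Iio_insertMin s.le_succ).2 h.antitoneOn
  not_antitoneOn := antitoneOn_Iio_insertMin_succ.not.2 h.not_antitoneOn
  not_monotoneOn := not_monotoneOn_Ico_insertMin s.lt_succ_self (s + 1).lt_succ_self
  monotoneOn := (monotoneOn_Ici_insertMin_succ le_rfl).2 h.monotoneOn

theorem not_monotoneOn_Ico_of_strictAntiOn_Iic (hp : StrictAntiOn p (Set.Iic c)) (hvc : v < c)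
    (hw : v + 1 < w) : ¬ MonotoneOn p (Set.Ico v w) := fun hmono =>
  (hp (by grind) (by grind) v.lt_succ_self).not_ge
    (hmono (by grind) (by grind) v.le_succ)

theorem hasAdjacentSites_of_active (hv : Active p v) (hv' : Active p (v + 1))
    (hvw : ∀ w, Active p w → v + 1 < w → ¬ MonotoneOn p (Set.Ico v w))
    (hp : ¬ MonotoneOn p (Set.Ici (v + 1))) : HasAdjacentSites (v + 1) (insertMin v p) where
  active_iff w := by
    simp only [active_insertMin_iff_of_not_monotoneOn (not_monotoneOn_Ici_of_le v.le_succ hp)]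
    grind [monotoneOn_Ico_of_le_succ]
  not_monotoneOn := (monotoneOn_Ici_insertMin_succ v.le_succ).not.2 hp

theorem IsSplit.not_monotoneOn_Ico (h : IsSplit c q p) (hv : v ≤ c + 1) (hq : q < w) :
    ¬ MonotoneOn p (Set.Ico v w) := fun hmono =>
  h.descent.not_ge (hmono (by grind [h.lt]) (by grind [h.lt]) h.lt.le)

theorem IsSplit.not_monotoneOn_Ici (h : IsSplit c q p) (hv : v ≤ c + 1) :
    ¬ MonotoneOn p (Set.Ici v) := fun hmono =>
  h.not_monotoneOn_Ico hv q.lt_succ_self (hmono.mono Set.Ico_subset_Ici_self)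

theorem IsSplit.hasAdjacentSites_insertMin (h : IsSplit c q p) (hv : v ≤ c) :
    HasAdjacentSites (v + 1) (insertMin v p) := by
  refine hasAdjacentSites_of_active ((h.active_iff _).2 (by omega))
    ((h.active_iff _).2 (by omega)) (fun w hw hvw => ?_) (h.not_monotoneOn_Ici (by omega))
  rcases hv.lt_or_eq with hvc | rfl
  · exact not_monotoneOn_Ico_of_strictAntiOn_Iic h.strictAntiOn hvc hvw
  · exact h.not_monotoneOn_Ico (by omega) (((h.active_iff w).1 hw).resolve_left (by omega))

theorem IsSplit.hasOneSite_insertMin (h : IsSplit c q p) :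
    HasOneSite (c + 2) (insertMin (c + 1) p) where
  active_iff w := by
    simp only [active_insertMin_iff_of_not_monotoneOn (h.not_monotoneOn_Ici le_rfl), h.active_iff]
    grind [monotoneOn_Ico_of_le_succ, h.not_monotoneOn_Ico le_rfl, h.lt]
  not_monotoneOn := (monotoneOn_Ici_insertMin_succ le_rfl).not.2 (h.not_monotoneOn_Ici le_rfl)

theorem antitoneOn_Iio_iff (hp : StrictAntiOn p (Set.Iic c)) (hc : p c < p (c + 1)) :
    AntitoneOn p (Set.Iio w) ↔ w ≤ c + 1 := by
  refine ⟨fun h => not_lt.1 fun hw => ?_, fun hw => hp.antitoneOn.mono (by grind)⟩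
  exact hc.not_ge (h (by grind) (by grind) c.le_succ)

theorem isSplit_of_active (hcv : c + 1 < v) (hp : StrictAntiOn p (Set.Iic c))
    (hc : p c < p (c + 1)) (hv : MonotoneOn p (Set.Ici v))
    (hactive : ∀ w, w ≤ c + 1 ∨ v ≤ w → Active p w) : IsSplit c v (insertMin v p) where
  lt := hcv
  active_iff w := by
    simp only [active_insertMin_iff_of_monotoneOn hv, antitoneOn_Iio_iff hp hc]
    constructor
    · grind
    · rintro (hw | hw)
      · exact .inl ⟨by omega, hactive w (.inl hw), hw⟩
      · exact .inr ⟨hw, hactive _ (.inr (by omega))⟩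
  strictAntiOn := strictAntiOn_Iic_insertMin (by omega) hp
  ascent := by grind [insertMin]
  descent := by grind [insertMin]
  monotoneOn := monotoneOn_Ici_insertMin_self hv

theorem IsSplit.isSplit_insertMin (h : IsSplit c q p) (hv : q < v) :
    IsSplit c v (insertMin v p) :=
  isSplit_of_active (h.lt.trans hv) h.strictAntiOn h.ascent
    (h.monotoneOn.mono (Set.Ici_subset_Ici.2 hv.le)) fun w hw => (h.active_iff w).2 (by omega)

theorem isValley_zero_id : IsValley 0 id where
  strictAntiOn := Set.Subsingleton.strictAntiOn _ (by simp [Set.Subsingleton])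
  strictMonoOn := strictMono_id.strictMonoOn _

theorem IsValley.active (h : IsValley c p) (v : ℕ) : Active p v := by
  have no_peak : ∀ ⦃i j k⦄, i < j → j < k → p i < p j → ¬ p k < p j := by
    intro i j k hij hjk hpi hpk
    rcases le_total j c with hj | hj
    · exact (h.strictAntiOn (hij.le.trans hj) hj hij).not_gt hpi
    · exact (h.strictMonoOn hj (hj.trans hjk.le) hjk).not_gt hpk
  exact fun i j k hij hjk => ⟨fun hik hkj => (no_peak hij hjk (hik.trans hkj) hkj).elim,
    fun hki hij' => (no_peak hij hjk hij' (hki.trans hij')).elim⟩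

theorem IsValley.not_monotoneOn_Ici (h : IsValley c p) (hv : v < c) :
    ¬ MonotoneOn p (Set.Ici v) := fun hmono =>
  (h.strictAntiOn hv.le Set.self_mem_Iic hv).not_ge (hmono Set.self_mem_Ici hv.le hv.le)

theorem IsValley.hasAdjacentSites_insertMin (h : IsValley c p) (hv : v + 1 < c) :
    HasAdjacentSites (v + 1) (insertMin v p) :=
  hasAdjacentSites_of_active (h.active _) (h.active _)
    (fun _ _ => not_monotoneOn_Ico_of_strictAntiOn_Iic h.strictAntiOn (by omega))
    (h.not_monotoneOn_Ici hv)

theorem IsValley.hasPeakSites_insertMin (h : IsValley (c + 1) p) :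
    HasPeakSites (c + 1) (insertMin c p) where
  active_iff w := by
    simp only [active_insertMin_iff_of_not_monotoneOn (h.not_monotoneOn_Ici c.lt_succ_self)]
    grind [monotoneOn_Ico_of_le_succ, h.active,
      not_monotoneOn_Ico_of_strictAntiOn_Iic h.strictAntiOn c.lt_succ_self]
  antitoneOn := antitoneOn_Iio_insertMin_succ.2 (h.strictAntiOn.antitoneOn.mono (by grind))
  not_antitoneOn := not_antitoneOn_Iio_insertMin (by omega)
  not_monotoneOn :=
    (monotoneOn_Ici_insertMin_succ le_rfl).not.2 (h.not_monotoneOn_Ici c.lt_succ_self)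
  monotoneOn := (monotoneOn_Ici_insertMin_succ c.le_succ).2 h.strictMonoOn.monotoneOn

theorem IsValley.isValley_insertMin (h : IsValley c p) (hv : v = c ∨ v = c + 1) :
    IsValley v (insertMin v p) where
  strictAntiOn := strictAntiOn_Iic_insertMin_self (h.strictAntiOn.mono (by grind))
  strictMonoOn := strictMonoOn_Ici_insertMin_self (h.strictMonoOn.mono (by grind))

theorem IsValley.isSplit_insertMin (h : IsValley c p) (hv : c + 1 < v) :
    IsSplit c v (insertMin v p) :=
  isSplit_of_active hv h.strictAntiOn (h.strictMonoOn Set.self_mem_Ici c.le_succ c.lt_succ_self)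
    (h.strictMonoOn.monotoneOn.mono (Set.Ici_subset_Ici.2 (by omega))) fun w _ => h.active w

end Shapes

section SuccessionRule

/-- The labels of the generating tree. A node labelled `constant`, `linear` or `quadratic` has
`1`, `n + 1` or `1 + n (n + 1) / 2` descendants at distance `n`. The other labels refer to `id`,
`IsSplit` and `IsValley`; there `k` counts the letters after position `q`, respectively `c`. -/
inductive Label
  | empty
  | constant
  | linear
  | quadratic
  | split (c k : ℕ)
  | valley (c k : ℕ)

/-- The succession rule: the labels of the children of a node. -/
def Label.children : Label → Multiset Label
  | empty => {valley 0 0}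
  | constant => {constant}
  | linear => {constant, linear}
  | quadratic => {linear, quadratic}
  | split c k => .replicate (c + 1) linear + {constant} + (Multiset.range (k + 1)).map (split c)
  | valley 0 k => {valley 0 (k + 1), valley 1 k} + (Multiset.range k).map (split 0)
  | valley (c + 1) k => .replicate c linear + {quadratic, valley (c + 1) (k + 1), valley (c + 2) k}
      + (Multiset.range k).map (split (c + 1))

/-- `HasLabel ℓ m p` says that the first `m` letters of `p` form a word with label `ℓ`. -/
inductive HasLabel : Label → ℕ → (ℕ → ℕ) → Prop
  | empty : HasLabel .empty 0 id
  | constant {s m p} (h : HasOneSite s p) (hs : s ≤ m) : HasLabel .constant m p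
  | adjacent {s m p} (h : HasAdjacentSites s p) (hs : s + 1 ≤ m) : HasLabel .linear m p
  | separated {s t m p} (h : HasSeparatedSites s t p) (ht : t ≤ m) : HasLabel .linear m p
  | quadratic {s m p} (h : HasPeakSites s p) (hs : s + 1 ≤ m) : HasLabel .quadratic m p
  | split {c q k m p} (h : IsSplit c q p) (hm : m = q + 1 + k) : HasLabel (.split c k) m p
  | valley {c k m p} (h : IsValley c p) (hm : m = c + 1 + k) : HasLabel (.valley c k) m p

open Classical in
/-- The active sites of the word formed by the first `m` letters of `p`. -/
noncomputable def activeSites (m : ℕ) (p : ℕ → ℕ) : Finset ℕ :=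
  {v ∈ Finset.range (m + 1) | Active p v}

theorem mem_activeSites {m v : ℕ} {p : ℕ → ℕ} : v ∈ activeSites m p ↔ v ≤ m ∧ Active p v := by
  simp [activeSites]

theorem sum_Ico_eq_sum_range_sub {M : Type*} [AddCommMonoid M] (a n : ℕ) (g : ℕ → M) :
    ∑ v ∈ Finset.Ico a (a + n), g v = ∑ i ∈ Finset.range n, g (a + n - 1 - i) := by
  rw [Finset.sum_Ico_eq_sum_range, Nat.add_sub_cancel_left,
    ← Finset.sum_range_reflect (fun i => g (a + i))]
  exact Finset.sum_congr rfl fun i hi => congrArg g (by grind)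

variable {M : Type*} [AddCommMonoid M] {c k q m : ℕ} {p : ℕ → ℕ} {ℓ : Label} {g : ℕ → M}
  {f : Label → M}

theorem sum_map_map_range (F : ℕ → Label) (n : ℕ) :
    (((Multiset.range n).map F).map f).sum = ∑ i ∈ Finset.range n, f (F i) := by
  rw [Multiset.map_map]
  rfl

theorem sum_map_children_split : ((Label.split c k).children.map f).sum =
    (c + 1) • f .linear + f .constant + ∑ i ∈ Finset.range (k + 1), f (.split c i) := by
  simp only [Label.children, Multiset.map_add, Multiset.sum_add, Multiset.map_replicate,
    Multiset.sum_replicate, Multiset.map_singleton, Multiset.sum_singleton, sum_map_map_range]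

theorem sum_map_children_valley_zero : ((Label.valley 0 k).children.map f).sum =
    f (.valley 0 (k + 1)) + f (.valley 1 k) + ∑ i ∈ Finset.range k, f (.split 0 i) := by
  simp only [Label.children, Multiset.map_add, Multiset.sum_add, Multiset.insert_eq_cons,
    Multiset.map_cons, Multiset.sum_cons, Multiset.map_singleton, Multiset.sum_singleton,
    sum_map_map_range]

theorem sum_map_children_valley_succ : ((Label.valley (c + 1) k).children.map f).sum =
    c • f .linear + f .quadratic + f (.valley (c + 1) (k + 1)) + f (.valley (c + 2) k) +
      ∑ i ∈ Finset.range k, f (.split (c + 1) i) := by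
  simp only [Label.children, Multiset.map_add, Multiset.sum_add, Multiset.insert_eq_cons,
    Multiset.map_replicate, Multiset.sum_replicate, Multiset.map_cons, Multiset.sum_cons,
    Multiset.map_singleton, Multiset.sum_singleton, sum_map_map_range, add_assoc]

theorem IsSplit.sum_activeSites (h : IsSplit c q p) (hm : m = q + 1 + k)
    (hgf : ∀ v ℓ', HasLabel ℓ' (m + 1) (insertMin v p) → g v = f ℓ') :
    ∑ v ∈ activeSites m p, g v = ((Label.split c k).children.map f).sum := by
  have hlinear : ∑ v ∈ Finset.range (c + 1), g v = (c + 1) • f .linear := by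
    rw [Finset.sum_eq_card_nsmul fun v hv =>
      hgf v _ (.adjacent (h.hasAdjacentSites_insertMin (by grind)) (by grind [h.lt])),
      Finset.card_range]
  have hconstant : g (c + 1) = f .constant :=
    hgf _ _ (.constant h.hasOneSite_insertMin (by grind [h.lt]))
  have hsplit : ∑ v ∈ Finset.Ico (q + 1) (q + 1 + (k + 1)), g v =
      ∑ i ∈ Finset.range (k + 1), f (.split c i) := by
    rw [sum_Ico_eq_sum_range_sub]
    exact Finset.sum_congr rfl fun i hi =>
      hgf _ _ (.split (h.isSplit_insertMin (by grind)) (by grind))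
  have hsites : activeSites m p =
      Finset.range (c + 1 + 1) ∪ Finset.Ico (q + 1) (q + 1 + (k + 1)) := by
    ext v
    simp only [mem_activeSites, h.active_iff, Finset.mem_union, Finset.mem_range, Finset.mem_Ico]
    grind [h.lt]
  rw [hsites, Finset.sum_union (Finset.disjoint_left.2 (by grind [h.lt])), Finset.sum_range_succ,
    hlinear, hconstant, hsplit, sum_map_children_split]

theorem IsValley.sum_activeSites (h : IsValley c p) (hm : m = c + 1 + k)
    (hgf : ∀ v ℓ', HasLabel ℓ' (m + 1) (insertMin v p) → g v = f ℓ') :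
    ∑ v ∈ activeSites m p, g v = ((Label.valley c k).children.map f).sum := by
  have hvalley : g c = f (.valley c (k + 1)) :=
    hgf _ _ (.valley (h.isValley_insertMin (.inl rfl)) (by omega))
  have hvalley' : g (c + 1) = f (.valley (c + 1) k) :=
    hgf _ _ (.valley (h.isValley_insertMin (.inr rfl)) (by omega))
  have hsplit : ∑ v ∈ Finset.Ico (c + 2) (c + 2 + k), g v =
      ∑ i ∈ Finset.range k, f (.split c i) := by
    rw [sum_Ico_eq_sum_range_sub]
    exact Finset.sum_congr rfl fun i hi =>
      hgf _ _ (.split (h.isSplit_insertMin (by grind)) (by grind))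
  have hsites : activeSites m p = Finset.range (c + 2 + k) := by
    ext v
    simp only [mem_activeSites, h.active, and_true, Finset.mem_range]
    omega
  rw [hsites, ← Finset.sum_range_add_sum_Ico g (Nat.le_add_right (c + 2) k), hsplit,
    Finset.sum_range_succ, Finset.sum_range_succ, hvalley, hvalley']
  cases c with
  | zero => rw [sum_map_children_valley_zero, Finset.sum_range_zero, zero_add]
  | succ c =>
    have hlinear : ∑ v ∈ Finset.range c, g v = c • f .linear := by
      rw [Finset.sum_eq_card_nsmul fun v hv =>
        hgf v _ (.adjacent (h.hasAdjacentSites_insertMin (by grind)) (by grind)),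
        Finset.card_range]
    have hquadratic : g c = f .quadratic := hgf _ _ (.quadratic h.hasPeakSites_insertMin (by omega))
    rw [Finset.sum_range_succ, hlinear, hquadratic, sum_map_children_valley_succ]

theorem HasLabel.sum_activeSites (h : HasLabel ℓ m p)
    (hgf : ∀ v ℓ', HasLabel ℓ' (m + 1) (insertMin v p) → g v = f ℓ') :
    ∑ v ∈ activeSites m p, g v = (ℓ.children.map f).sum := by
  cases h with
  | empty =>
    have hsites : activeSites 0 id = {0} := by ext; simp [mem_activeSites, isValley_zero_id.active]
    rw [hsites, Finset.sum_singleton,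
      hgf 0 _ (.valley (isValley_zero_id.isValley_insertMin (.inl rfl)) (k := 0) rfl)]
    simp [Label.children]
  | @constant s _ _ h hs =>
    have hsites : activeSites m p = {s} := by
      ext; simp only [mem_activeSites, h.active_iff]; grind
    rw [hsites, Finset.sum_singleton, hgf s _ (.constant h.hasOneSite_insertMin (by omega))]
    simp [Label.children]
  | @adjacent s _ _ h hs =>
    have hsites : activeSites m p = {s + 1, s} := by
      ext; simp only [mem_activeSites, h.active_iff]; grind
    rw [hsites, Finset.sum_pair (by omega),
      hgf _ _ (.constant h.hasOneSite_insertMin (by omega)),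
      hgf _ _ (.adjacent h.hasAdjacentSites_insertMin (by omega))]
    simp [Label.children]
  | @separated s t _ _ h ht =>
    have hsites : activeSites m p = {s, t} := by
      ext; simp only [mem_activeSites, h.active_iff]; grind [h.lt]
    rw [hsites, Finset.sum_pair h.lt.ne,
      hgf _ _ (.constant h.hasOneSite_insertMin (by grind [h.lt])),
      hgf _ _ (.separated h.hasSeparatedSites_insertMin (by omega))]
    simp [Label.children]
  | @quadratic s _ _ h hs =>
    have hsites : activeSites m p = {s + 1, s} := by
      ext; simp only [mem_activeSites, h.active_iff]; grind
    rw [hsites, Finset.sum_pair (by omega),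
      hgf _ _ (.separated h.hasSeparatedSites_insertMin (by omega)),
      hgf _ _ (.quadratic h.hasPeakSites_insertMin (by omega))]
    simp [Label.children]
  | split h hm => exact h.sum_activeSites hm hgf
  | valley h hm => exact h.sum_activeSites hm hgf

end SuccessionRule

section GeneratingFunctions

/-- The number of words reached from the word formed by the first `m` letters of `p` by `n`
successive insertions of a new smallest letter at an active site. -/
noncomputable def descendantCount : ℕ → ℕ → (ℕ → ℕ) → ℕ
  | 0, _, _ => 1
  | n + 1, m, p => ∑ v ∈ activeSites m p, descendantCount n (m + 1) (insertMin v p)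

theorem HasLabel.descendantCount_eq_coeff {R : Type*} [Semiring R] {F : Label → R⟦X⟧}
    (hF : ∀ ℓ, F ℓ = 1 + X * (ℓ.children.map F).sum) {ℓ : Label} {m : ℕ} {p : ℕ → ℕ}
    (h : HasLabel ℓ m p) (n : ℕ) : (descendantCount n m p : R) = coeff n (F ℓ) := by
  induction n generalizing ℓ m p with
  | zero => simp [hF ℓ, descendantCount]
  | succ n ih =>
    rw [hF ℓ, map_add, coeff_succ_X_mul, coeff_one, if_neg n.succ_ne_zero, zero_add,
      map_multiset_sum, Multiset.map_map, descendantCount, Nat.cast_sum]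
    exact h.sum_activeSites fun v ℓ' hv => ih hv

variable {R : Type*} [CommRing R]

/-- The generating function, by distance, of the descendants of a node, in closed form: `r`, `s`
and `t` stand for the inverses of `1 - x`, `1 - 2 * x` and `1 - 3 * x + x ^ 2`. -/
def Label.gf (x r s t : R) : Label → R
  | empty => 1 + x * (s * x * (x * r ^ 3 - 2 * r ^ 2) + t * (1 + x ^ 2 * t) + t * x * r +
      r * x * (r ^ 2 - (r + x * r ^ 3)))
  | constant => r
  | linear => r ^ 2
  | quadratic => r + x * r ^ 3
  | split c k => (1 + x * r + (c + 1) * x * r ^ 2) * r ^ (k + 1)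
  | valley 0 k => s * x * (x * r ^ 3 - 2 * r ^ 2) + (t * (1 + x ^ 2 * t) + t * x * r) * r ^ k +
      r * x * (r ^ 2 - (r + x * r ^ 3))
  | valley (c + 1) k => s * x * (x * r ^ 3 - 2 * r ^ 2) +
      (t * (1 + x ^ 2 * t) + (c + 2) * (t * x * r)) * r ^ k

variable {x r s t : R}

theorem mul_sum_range_pow_succ (hr : r * (1 - x) = 1) (k : ℕ) :
    x * ∑ i ∈ Finset.range k, r ^ (i + 1) = r ^ k - 1 := by
  induction k with
  | zero => simp
  | succ k ih =>
    rw [Finset.sum_range_succ, mul_add, ih]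
    linear_combination -r ^ k * hr

theorem Label.gf_split_eq (hr : r * (1 - x) = 1) (c k : ℕ) :
    (split c k).gf x r s t = 1 + x * ((split c k).children.map (gf x r s t)).sum := by
  simp only [sum_map_children_split, gf, ← Finset.mul_sum, nsmul_eq_mul]
  push_cast
  linear_combination -(1 + x * r + (c + 1) * x * r ^ 2) * mul_sum_range_pow_succ hr (k + 1)

theorem Label.gf_valley_eq (hr : r * (1 - x) = 1) (hs : s * (1 - 2 * x) = 1)
    (ht : t * (1 - 3 * x + x ^ 2) = 1) (c k : ℕ) :
    (valley c k).gf x r s t = 1 + x * ((valley c k).children.map (gf x r s t)).sum := by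
  have hslope : t * x * r * (1 - x * r - x) = x * r ^ 2 := by
    linear_combination x * r ^ 2 * ht - t * x * r * (1 - x) * hr
  have hconst : t * (1 + x ^ 2 * t) * (1 - x * r - x) = x * (t * x * r) + 1 + x * r := by
    linear_combination (r * (1 + x ^ 2 * t)) * ht + hr - t * (1 + x ^ 2 * t) * (1 - x) * hr
  have hgeom := mul_sum_range_pow_succ hr k
  cases c with
  | zero =>
    simp only [sum_map_children_valley_zero, gf, ← Finset.mul_sum]
    push_cast
    linear_combination x * (x * r ^ 3 - 2 * r ^ 2) * hs + r ^ k * hconst + r ^ k * hslope +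
      x * (r ^ 2 - (r + x * r ^ 3)) * hr - (1 + x * r + x * r ^ 2) * hgeom
  | succ c =>
    simp only [sum_map_children_valley_succ, gf, ← Finset.mul_sum, nsmul_eq_mul]
    push_cast
    linear_combination x * (x * r ^ 3 - 2 * r ^ 2) * hs + r ^ k * hconst +
      (c + 2) * r ^ k * hslope - (1 + x * r + (c + 2) * x * r ^ 2) * hgeom

theorem Label.gf_eq (hr : r * (1 - x) = 1) (hs : s * (1 - 2 * x) = 1)
    (ht : t * (1 - 3 * x + x ^ 2) = 1) (ℓ : Label) :
    ℓ.gf x r s t = 1 + x * (ℓ.children.map (gf x r s t)).sum := by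
  cases ℓ with
  | empty => simp [children, gf, add_assoc]
  | constant =>
    simp only [children, gf, Multiset.map_singleton, Multiset.sum_singleton]
    linear_combination hr
  | linear =>
    simp only [children, gf, Multiset.insert_eq_cons, Multiset.map_cons, Multiset.sum_cons,
      Multiset.map_singleton, Multiset.sum_singleton]
    linear_combination (1 + r) * hr
  | quadratic =>
    simp only [children, gf, Multiset.insert_eq_cons, Multiset.map_cons, Multiset.sum_cons,
      Multiset.map_singleton, Multiset.sum_singleton]
    linear_combination (1 + x * r ^ 2) * hr
  | split c k => exact gf_split_eq hr c k
  | valley c k => exact gf_valley_eq hr hs ht c k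

theorem Label.mul_gf_empty (hr : r * (1 - x) = 1) (hs : s * (1 - 2 * x) = 1)
    (ht : t * (1 - 3 * x + x ^ 2) = 1) :
    (1 - x) ^ 4 * (1 - 2 * x) * (1 - 3 * x + x ^ 2) ^ 2 * empty.gf x r s t =
      1 - 11 * x + 51 * x ^ 2 - 129 * x ^ 3 + 195 * x ^ 4 - 183 * x ^ 5 + 104 * x ^ 6 -
        30 * x ^ 7 + 3 * x ^ 8 := by
  calc (1 - x) ^ 4 * (1 - 2 * x) * (1 - 3 * x + x ^ 2) ^ 2 * empty.gf x r s t
    _ = (1 - x) ^ 4 * (1 - 2 * x) * (1 - 3 * x + x ^ 2) ^ 2 + x * (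
          (1 - 3 * x + x ^ 2) ^ 2 * (s * (1 - 2 * x)) * x *
            (x * (1 - x) * (r * (1 - x)) ^ 3 - 2 * (1 - x) ^ 2 * (r * (1 - x)) ^ 2) +
          (1 - x) ^ 4 * (1 - 2 * x) * ((t * (1 - 3 * x + x ^ 2)) * (1 - 3 * x + x ^ 2) +
            x ^ 2 * (t * (1 - 3 * x + x ^ 2)) ^ 2) +
          (1 - x) ^ 3 * (1 - 2 * x) * (1 - 3 * x + x ^ 2) * (t * (1 - 3 * x + x ^ 2)) * x *
            (r * (1 - x)) +
          (1 - 2 * x) * (1 - 3 * x + x ^ 2) ^ 2 * x * ((1 - x) * (r * (1 - x)) ^ 3 -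
            (1 - x) ^ 2 * (r * (1 - x)) ^ 2 - x * (r * (1 - x)) ^ 4)) := by
      rw [gf]
      ring
    _ = _ := by
      rw [hr, hs, ht]
      ring

end GeneratingFunctions

section Permutations

/-- The word `π 0, π 1, …, π (n - 1)` of a permutation, continued by the identity: no letter of the
tail lies in an inversion, so `Avoids` and `Active` need not mention the length `n`. -/
def toWord {n : ℕ} (π : Equiv.Perm (Fin n)) (i : ℕ) : ℕ := if h : i < n then π ⟨i, h⟩ else i

/-- The permutation obtained from `π` by putting a new smallest value at position `v`. -/
def insertZero {n : ℕ} (v : Fin (n + 1)) (π : Equiv.Perm (Fin n)) : Equiv.Perm (Fin (n + 1)) :=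
  (finSuccEquiv' v).trans (π.optionCongr.trans (finSuccEquiv' 0).symm)

variable {n m i j : ℕ} {π : Equiv.Perm (Fin n)}

theorem toWord_fin (π : Equiv.Perm (Fin n)) (i : Fin n) : toWord π i = π i := by simp [toWord]

theorem toWord_of_le (h : n ≤ i) : toWord π i = i := dif_neg h.not_gt

theorem toWord_injective : Function.Injective (toWord (n := n)) := fun π ρ h =>
  Equiv.ext fun i => Fin.ext (by rw [← toWord_fin, h, toWord_fin])

theorem lt_of_toWord_lt (hij : i < j) (h : toWord π j < toWord π i) : j < n := by
  by_contra! hj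
  rw [toWord_of_le hj] at h
  rcases lt_or_ge i n with hi | hi
  · lift i to Fin n using hi
    rw [toWord_fin] at h
    exact hj.not_gt (h.trans (π i).2)
  · rw [toWord_of_le hi] at h
    omega

theorem toWord_insertZero (v : Fin (n + 1)) (π : Equiv.Perm (Fin n)) :
    toWord (insertZero v π) = insertMin v (toWord π) := by
  funext i
  rcases lt_or_ge i (n + 1) with hi | hi
  · lift i to Fin (n + 1) using hi
    rw [toWord_fin]
    rcases Fin.eq_self_or_eq_succAbove v i with rfl | ⟨j, rfl⟩
    · simp [insertZero, insertMin_self]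
    · have hj : (v.succAbove j : ℕ) = skip v j := by grind [Fin.succAbove, skip]
      rw [hj, insertMin_skip, toWord_fin]
      simp [insertZero]
  · grind [toWord_of_le, insertMin]

theorem bijective_insertZero :
    Function.Bijective fun x : Fin (n + 1) × Equiv.Perm (Fin n) => insertZero x.1 x.2 := by
  refine (Fintype.bijective_iff_injective_and_card _).2 ⟨fun ⟨v, π⟩ ⟨w, ρ⟩ h => ?_, ?_⟩
  · have h' : toWord (insertZero v π) = toWord (insertZero w ρ) := congrArg toWord h
    rw [toWord_insertZero, toWord_insertZero, insertMin_inj] at h'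
    exact Prod.ext (Fin.ext h'.1) (toWord_injective h'.2)
  · simp [Fintype.card_perm, Nat.factorial_succ]

theorem containsPattern_iff_of_inverse {k : ℕ} {σ τ : Fin k → Fin k}
    (hτσ : Function.LeftInverse τ σ) (hστ : Function.RightInverse τ σ) :
    ContainsPattern π σ ↔ ∃ f : Fin k → Fin n, StrictMono f ∧ StrictMono (π ∘ f ∘ τ) := by
  constructor
  · rintro ⟨f, hf⟩
    exact ⟨f, f.strictMono, fun a b hab => (hf _ _).1 (by rwa [hστ, hστ])⟩
  · rintro ⟨f, hf, hπ⟩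
    refine ⟨OrderEmbedding.ofStrictMono f hf, fun a b => ?_⟩
    simpa only [Function.comp_apply, hτσ a, hτσ b] using!
      (hπ.lt_iff_lt (a := σ a) (b := σ b)).symm

theorem strictMono_fin_four {α : Type*} [Preorder α] {f : Fin 4 → α} :
    StrictMono f ↔ f 0 < f 1 ∧ f 1 < f 2 ∧ f 2 < f 3 := by
  simp [Fin.strictMono_iff_lt_succ, Fin.forall_fin_succ]

theorem avoids_toWord_iff : Avoids (toWord π) ↔
    ∀ σ ∈ ({![0,1,3,2], ![1,3,2,0], ![2,3,0,1]} : Set (Fin 4 → Fin 4)), ¬ ContainsPattern π σ := by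
  simp only [Set.mem_insert_iff, Set.mem_singleton_iff, forall_eq_or_imp, forall_eq]
  rw [containsPattern_iff_of_inverse (τ := ![0,1,3,2]) (by decide) (by decide),
    containsPattern_iff_of_inverse (τ := ![3,0,2,1]) (by decide) (by decide),
    containsPattern_iff_of_inverse (τ := ![2,3,0,1]) (by decide) (by decide)]
  simp only [strictMono_fin_four, Function.comp_apply]
  constructor
  · intro h
    refine ⟨?_, ?_, ?_⟩ <;> rintro ⟨f, ⟨h01, h12, h23⟩, hf⟩ <;>
      have hnot := h h01 h12 h23 <;> simp only [toWord_fin] at hnot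
    exacts [hnot.1 hf, hnot.2.1 hf, hnot.2.2 hf]
  · rintro ⟨h1243, h2431, h3412⟩ i j k l hij hjk hkl
    rcases lt_or_ge l n with hl | hl
    · lift l to Fin n using hl
      lift k to Fin n using hkl.trans l.2
      lift j to Fin n using hjk.trans k.2
      lift i to Fin n using hij.trans j.2
      simp only [toWord_fin]
      exact ⟨fun h => h1243 ⟨![i, j, k, l], ⟨hij, hjk, hkl⟩, h⟩,
        fun h => h2431 ⟨![i, j, k, l], ⟨hij, hjk, hkl⟩, h⟩,
        fun h => h3412 ⟨![i, j, k, l], ⟨hij, hjk, hkl⟩, h⟩⟩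
    · have hil := hij.trans (hjk.trans hkl)
      exact ⟨fun h => hl.not_gt (lt_of_toWord_lt hkl h.2.2),
        fun h => hl.not_gt (lt_of_toWord_lt hil h.1),
        fun h => hl.not_gt (lt_of_toWord_lt hil h.2.1)⟩

open Classical in
theorem sum_descendantCount_succ (n m : ℕ) :
    ∑ π : Equiv.Perm (Fin m) with Avoids (toWord π), descendantCount (n + 1) m (toWord π) =
      ∑ ρ : Equiv.Perm (Fin (m + 1)) with Avoids (toWord ρ),
        descendantCount n (m + 1) (toWord ρ) := by
  rw [Finset.sum_filter, Finset.sum_filter, ← bijective_insertZero.sum_comp,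
    Fintype.sum_prod_type_right]
  refine Finset.sum_congr rfl fun π _ => ?_
  simp only [toWord_insertZero, avoids_insertMin, descendantCount, activeSites, Finset.sum_filter,
    Finset.sum_range, ite_and, Finset.sum_ite_irrel, Finset.sum_const_zero]

open Classical in
theorem sum_descendantCount (n m : ℕ) :
    ∑ π : Equiv.Perm (Fin m) with Avoids (toWord π), descendantCount n m (toWord π) =
      avoiderCount {![0,1,3,2], ![1,3,2,0], ![2,3,0,1]} (m + n) := by
  induction n generalizing m with
  | zero =>
    simp [descendantCount, avoiderCount, Nat.card_eq_fintype_card, Fintype.card_subtype,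
      avoids_toWord_iff]
  | succ n ih => rw [sum_descendantCount_succ, ih, Nat.add_right_comm, Nat.add_assoc]

theorem avoiderCount_eq_descendantCount (n : ℕ) :
    avoiderCount {![0,1,3,2], ![1,3,2,0], ![2,3,0,1]} n = descendantCount n 0 id := by
  classical
  have hid : toWord (default : Equiv.Perm (Fin 0)) = id :=
    funext fun _ => toWord_of_le (Nat.zero_le _)
  have havoids : Avoids id := by
    intro i j k l hij hjk hkl
    simp only [id]
    omega
  rw [← Nat.zero_add n, ← sum_descendantCount, Finset.sum_filter, Fintype.sum_unique, hid,
    if_pos havoids, Nat.zero_add]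

end Permutations

theorem statement_1 :
    ((1 : PowerSeries ℚ) - X)^4 * (1 - 2*X) * (1 - 3*X + X^2)^2 * avoiderGF ({![0,1,3,2], ![1,3,2,0], ![2,3,0,1]} : Set (Fin 4 → Fin 4)) =
      1 - 11*X + 51*X^2 - 129*X^3 + 195*X^4 - 183*X^5 + 104*X^6 - 30*X^7 + 3*X^8 := by
  have hr : (1 - X : ℚ⟦X⟧)⁻¹ * (1 - X) = 1 := PowerSeries.inv_mul_cancel _ (by simp)
  have hs : (1 - 2 * X : ℚ⟦X⟧)⁻¹ * (1 - 2 * X) = 1 := PowerSeries.inv_mul_cancel _ (by simp)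
  have ht : (1 - 3 * X + X ^ 2 : ℚ⟦X⟧)⁻¹ * (1 - 3 * X + X ^ 2) = 1 :=
    PowerSeries.inv_mul_cancel _ (by simp)
  rw [← Label.mul_gf_empty hr hs ht]
  congr 1
  ext n
  rw [avoiderGF, coeff_mk, avoiderCount_eq_descendantCount,
    HasLabel.empty.descendantCount_eq_coeff (Label.gf_eq hr hs ht)]
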